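/- arXiv:2204.08161 — 2 statements merged into one kernel-verified Lean document; each statement's English description precedes it below -/
import Mathlib

section
/- Let G be a finite simple graph and let u and v be adjacent vertices of G, each of degree at most 4. If G − {u, v} is (3,1)-decomposable, then G is (3,1)-decomposable. (This is the reducibility behind Lemma 2.2(2): a vertex-minimal graph admitting no (3,1)-decomposition does not contain two adjacent 4-vertices.) -/
open SimpleGraph

/-- A graph `H` is `d`-degenerate: every induced subgraph on a nonempty vertex set
has a vertex of degree at most `d` (within that induced subgraph). -/
def Degenerate {V : Type*} (d : ℕ) (H : SimpleGraph V) : Prop :=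
  ∀ s : Set V, s.Nonempty → ∃ v ∈ s, (H.neighborSet v ∩ s).ncard ≤ d

/-- The graph `H` has maximum degree at most `h`. -/
def MaxDegreeLE {V : Type*} (h : ℕ) (H : SimpleGraph V) : Prop :=
  ∀ v : V, (H.neighborSet v).ncard ≤ h

/-- A graph `G` is `(d,h)`-decomposable: its edge set is partitioned into the edge
sets of two spanning subgraphs `H₁` and `H₂`, where `H₁` is `d`-degenerate and
`H₂` has maximum degree at most `h`. -/
def Decomposable {V : Type*} (d h : ℕ) (G : SimpleGraph V) : Prop :=
  ∃ H₁ H₂ : SimpleGraph V, H₁ ⊔ H₂ = G ∧ Disjoint H₁ H₂ ∧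
    Degenerate d H₁ ∧ MaxDegreeLE h H₂

/-!
Give the edge `uv` to the bounded-degree part. In the remaining part `u` and `v` then have degree
at most `d`, so a vertex set meeting `{u, v}` has a vertex of degree at most `d`, while a vertex
set avoiding `{u, v}` has one by the degeneracy of the given part of `G - {u, v}`. The edge `uv`
shares no vertex with `G - {u, v}`, so adding it to the bounded-degree part raises no degree above
`max h 1`.
-/

section

variable {V W : Type*} {d h h' : ℕ}

theorem Degenerate.of_induce_compl {H : SimpleGraph V} {X : Set V}
    (hX : ∀ x ∈ X, (H.neighborSet x).encard ≤ d) (hH : Degenerate d (H.induce Xᶜ)) :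
    Degenerate d H := by
  intro s hs
  by_cases hsX : ∃ x ∈ s, x ∈ X
  · obtain ⟨x, hxs, hxX⟩ := hsX
    obtain ⟨hfin, hcard⟩ := Set.encard_le_coe_iff_finite_ncard_le.mp (hX x hxX)
    exact ⟨x, hxs, (Set.ncard_inter_le_ncard_left _ _ hfin).trans hcard⟩
  · push Not at hsX
    have hsub : s ⊆ Set.range (Subtype.val : ↥Xᶜ → V) := by
      rwa [Subtype.range_coe]
    obtain ⟨w, hws, hcard⟩ := hH (Subtype.val ⁻¹' s) (hs.preimage' hsub)
    have hpre : (H.induce Xᶜ).neighborSet w ∩ Subtype.val ⁻¹' s =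
        Subtype.val ⁻¹' (H.neighborSet w ∩ s) := rfl
    rw [hpre, Set.ncard_preimage_of_injective_subset_range Subtype.val_injective
      (Set.inter_subset_right.trans hsub)] at hcard
    exact ⟨w, hws, hcard⟩

theorem MaxDegreeLE.mono {H : SimpleGraph V} (hH : MaxDegreeLE h H) (hh : h ≤ h') :
    MaxDegreeLE h' H :=
  fun v ↦ (hH v).trans hh

theorem MaxDegreeLE.map {H : SimpleGraph V} (hH : MaxDegreeLE h H) (f : V ↪ W) :
    MaxDegreeLE h (H.map f) := by
  intro w
  by_cases hw : w ∈ Set.range f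
  · obtain ⟨v, rfl⟩ := hw
    have himage : (H.map f).neighborSet (f v) = f '' H.neighborSet v := by
      ext; simp
    rw [himage, Set.ncard_image_of_injective _ f.injective]
    exact hH v
  · have hempty : (H.map f).neighborSet w = ∅ := by
      ext x
      simp only [mem_neighborSet, map_adj, Set.mem_empty_iff_false, iff_false]
      rintro ⟨a, -, -, rfl, -⟩
      exact hw ⟨a, rfl⟩
    simp [hempty]

theorem MaxDegreeLE.sup_of_disjoint_support {H K : SimpleGraph V} (hH : MaxDegreeLE h H)
    (hK : MaxDegreeLE h K) (hHK : Disjoint H.support K.support) : MaxDegreeLE h (H ⊔ K) := by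
  intro v
  rw [neighborSet_sup]
  by_cases hv : v ∈ H.support
  · have hvK : K.IsIsolated v :=
      K.notMem_support_iff_isIsolated.mp (Set.disjoint_left.mp hHK hv)
    simpa [hvK] using hH v
  · have hvH : H.IsIsolated v := H.notMem_support_iff_isIsolated.mp hv
    simpa [hvH] using hK v

theorem maxDegreeLE_edge (u v : V) : MaxDegreeLE 1 (edge u v) := by
  intro w
  have hsub : ((edge u v).neighborSet w).Subsingleton := by
    intro a ha b hb
    grind [mem_neighborSet]
  exact (Set.ncard_le_one hsub.finite).mpr hsub

theorem encard_neighborSet_sdiff_edge_add_one {G : SimpleGraph V} {u v : V} (huv : G.Adj u v) :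
    ((G \ edge u v).neighborSet u).encard + 1 = (G.neighborSet u).encard := by
  have hsdiff : (G \ edge u v).neighborSet u = G.neighborSet u \ {v} := by
    ext w
    grind [mem_neighborSet, sdiff_adj, huv.ne]
  rw [hsdiff, Set.encard_sdiff_singleton_add_one ((G.mem_neighborSet u v).mpr huv)]

theorem induce_compl_sdiff_sup_spanningCoe (G : SimpleGraph V) {M : SimpleGraph V} {X : Set V}
    (hM : M.support ⊆ X) (K : SimpleGraph ↥Xᶜ) :
    (G \ (M ⊔ K.spanningCoe)).induce Xᶜ = G.induce Xᶜ \ K := by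
  ext a b
  have hMab : ¬M.Adj a b := fun hab ↦ a.2 (hM hab.mem_support_left)
  have hK : K.spanningCoe.Adj a b ↔ K.Adj a b := by
    rw [← induce_adj, induce_spanningCoe]
  simp only [induce_adj, sdiff_adj, sup_adj, hMab, hK, false_or]

theorem Decomposable.of_induce_compl {G M : SimpleGraph V} {X : Set V} (hMG : M ≤ G)
    (hMX : M.support ⊆ X) (hM : MaxDegreeLE h M)
    (hX : ∀ x ∈ X, ((G \ M).neighborSet x).encard ≤ d)
    (hG : Decomposable d h (G.induce Xᶜ)) : Decomposable d h G := by
  obtain ⟨K₁, K₂, hsup, hdisj, hK₁, hK₂⟩ := hG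
  have hle : M ⊔ K₂.spanningCoe ≤ G := by
    refine sup_le hMG ((map_monotone _ ?_).trans (spanningCoe_induce_le G Xᶜ))
    exact hsup ▸ le_sup_right
  have hsupport : Disjoint M.support K₂.spanningCoe.support := by
    rw [support_spanningCoe]
    exact disjoint_compl_right.mono hMX (Subtype.coe_image_subset _ _)
  have hinduce : (G \ (M ⊔ K₂.spanningCoe)).induce Xᶜ = K₁ := by
    rw [induce_compl_sdiff_sup_spanningCoe G hMX, ← hsup, sup_sdiff_right_self,
      hdisj.sdiff_eq_left]
  refine ⟨G \ (M ⊔ K₂.spanningCoe), M ⊔ K₂.spanningCoe, sdiff_sup_cancel hle,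
    disjoint_sdiff_self_left, .of_induce_compl (fun x hx ↦ ?_) (hinduce ▸ hK₁),
    hM.sup_of_disjoint_support (hK₂.map _) hsupport⟩
  exact (Set.encard_le_encard
    (neighborSet_mono (sdiff_le_sdiff_left le_sup_left) x)).trans (hX x hx)

-- `encard` rules out infinite neighborhoods, whose `ncard` is the junk value `0`.
theorem stmt_1_general {G : SimpleGraph V} {u v : V} (hh : 1 ≤ h) (huv : G.Adj u v)
    (hu : (G.neighborSet u).encard ≤ d + 1) (hv : (G.neighborSet v).encard ≤ d + 1)
    (hdec : Decomposable d h (G.induce {w : V | w ≠ u ∧ w ≠ v})) : Decomposable d h G := by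
  have hcompl : {w : V | w ≠ u ∧ w ≠ v} = {u, v}ᶜ := by ext; simp
  rw [hcompl] at hdec
  have hsupport : (edge u v).support ⊆ {u, v} := by
    rintro w ⟨x, hwx⟩
    grind
  have encard_le {a b : V} (hab : G.Adj a b) (ha : (G.neighborSet a).encard ≤ d + 1) :
      ((G \ edge a b).neighborSet a).encard ≤ d := by
    rwa [← encard_neighborSet_sdiff_edge_add_one hab,
      ENat.add_le_add_iff_right ENat.one_ne_top] at ha
  refine .of_induce_compl ((edge_le_iff G).mpr (.inr huv)) hsupport
    ((maxDegreeLE_edge u v).mono hh) ?_ hdec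
  rintro x (rfl | rfl)
  · exact encard_le huv hu
  · exact edge_comm u x ▸ encard_le huv.symm hv

end

theorem stmt_1 {V : Type*} [Fintype V] (G : SimpleGraph V) (u v : V)
    (huv : G.Adj u v)
    (hdu : (G.neighborSet u).ncard ≤ 4) (hdv : (G.neighborSet v).ncard ≤ 4)
    (hdec : Decomposable 3 1 (G.induce {w : V | w ≠ u ∧ w ≠ v})) :
    Decomposable 3 1 G := by
  have encard_le (w : V) (hw : (G.neighborSet w).ncard ≤ 4) : (G.neighborSet w).encard ≤ 3 + 1 :=
    Set.encard_le_coe_iff_finite_ncard_le.mpr ⟨Set.toFinite _, hw⟩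
  exact stmt_1_general le_rfl huv (encard_le u hdu) (encard_le v hdv) hdec
end

section
/- Let G be a finite simple graph containing a vertex v of degree 5, and let v₁, v₂, v₃, v₄ be four distinct neighbors of v such that v₁v₂, v₂v₃ and v₃v₄ are edges of G and these are the only edges among {v₁, v₂, v₃, v₄} (so v₁ is not adjacent to v₃ or v₄, and v₂ is not adjacent to v₄). Suppose deg(v₁) = 5, deg(v₂) = deg(v₄) = 4 and deg(v₃) = 6. If G − {v, v₁, v₂, v₃, v₄} is (3,1)-decomposable, then G is (3,1)-decomposable. (This is the configuration of Lemma 2.3(2): three consecutive triangles at a 5-vertex, one a (4,5,5)-face and the other two (4,5,6)-faces.) -/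
open SimpleGraph

/-!
Colour the edges `vv₁` and `v₂v₃` with the bounded-degree part: they form a matching avoiding the
rest of the graph, so they fit any `h ≥ 1`. All remaining edges at the five vertices join the
degenerate part. When `v₃`, `v₁`, `v₄`, `v`, `v₂` are put back in this order, so many neighbours of
each are matched to it or still missing that at most `d` of them are joined to it in that part.
-/

section

variable {V : Type*} {d h k : ℕ} {G H K : SimpleGraph V} {W T : Set V}

/-- `H` is `d`-degenerate on the vertex set `W`, that is, its subgraph induced on `W` is
`d`-degenerate. Vertices of `W` are kept in the ambient type `V`, so that `W` can be enlarged
one vertex at a time. -/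
def DegenerateOn (d : ℕ) (H : SimpleGraph V) (W : Set V) : Prop :=
  ∀ s ⊆ W, s.Nonempty → ∃ v ∈ s, (H.neighborSet v ∩ s).ncard ≤ d

theorem degenerateOn_univ : DegenerateOn d H Set.univ ↔ Degenerate d H :=
  ⟨fun hH s => hH s s.subset_univ, fun hH s _ => hH s⟩

theorem DegenerateOn.of_induce (hH : Degenerate d (H.induce W)) : DegenerateOn d H W := by
  rintro s hsW ⟨x, hx⟩
  obtain ⟨w, hws, hw⟩ := hH (Subtype.val ⁻¹' s) ⟨⟨x, hsW hx⟩, hx⟩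
  refine ⟨w, hws, ?_⟩
  rwa [neighborSet_induce, ← Set.preimage_inter,
    Set.ncard_preimage_of_injective_subset_range Subtype.val_injective
      (by simpa using Set.inter_subset_right.trans hsW)] at hw

theorem DegenerateOn.insert {x : V} (hW : DegenerateOn d H W)
    (hx : (H.neighborSet x ∩ W).encard ≤ d) : DegenerateOn d H (insert x W) := by
  intro s hs hne
  by_cases hxs : x ∈ s
  · have hsub : H.neighborSet x ∩ s ⊆ H.neighborSet x ∩ W := fun y ⟨hxy, hys⟩ =>
      ⟨hxy, (hs hys).resolve_left hxy.ne'⟩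
    exact ⟨x, hxs,
      (Set.encard_le_coe_iff_finite_ncard_le.1 ((Set.encard_le_encard hsub).trans hx)).2⟩
  · exact hW s ((Set.subset_insert_iff_of_notMem hxs).1 hs) hne

theorem encard_neighborSet_inter_le {x : V} (hHG : H ≤ G)
    (hdeg : (G.neighborSet x).encard ≤ (d + k : ℕ)) (hTG : ∀ t ∈ T, G.Adj x t)
    (hT : k ≤ T.encard) (hTW : ∀ t ∈ T, t ∈ W → ¬H.Adj x t) :
    (H.neighborSet x ∩ W).encard ≤ d := by
  have hsub : H.neighborSet x ∩ W ⊆ G.neighborSet x \ T := fun y ⟨hxy, hyW⟩ =>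
    ⟨hHG hxy, fun hyT => hTW y hyT hyW hxy⟩
  rw [← ENat.add_le_add_iff_right (ENat.natCast_ne_top k)]
  calc (H.neighborSet x ∩ W).encard + k
      ≤ (G.neighborSet x \ T).encard + T.encard := add_le_add (Set.encard_le_encard hsub) hT
    _ = (G.neighborSet x).encard := Set.encard_sdiff_add_encard_of_subset hTG
    _ ≤ d + k := mod_cast hdeg

theorem MaxDegreeLE.mono_s5 (hkh : k ≤ h) (hH : MaxDegreeLE k H) : MaxDegreeLE h H :=
  fun x => (hH x).trans hkh

theorem MaxDegreeLE.sup (hH : MaxDegreeLE h H) (hK : MaxDegreeLE h K)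
    (hdisj : Disjoint H.support K.support) : MaxDegreeLE h (H ⊔ K) := by
  intro x
  have hsup : (H ⊔ K).neighborSet x = H.neighborSet x ∪ K.neighborSet x := rfl
  by_cases hx : x ∈ H.support
  · have hxK : K.IsIsolated x :=
      K.notMem_support_iff_isIsolated.1 (Set.disjoint_left.1 hdisj hx)
    simpa only [hsup, hxK.neighborSet_eq_empty, Set.union_empty] using hH x
  · have hxH : H.IsIsolated x := H.notMem_support_iff_isIsolated.1 hx
    simpa only [hsup, hxH.neighborSet_eq_empty, Set.empty_union] using hK x

theorem support_spanningCoe_subset (K : SimpleGraph W) : K.spanningCoe.support ⊆ W :=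
  K.support_spanningCoe ▸ Subtype.coe_image_subset W K.support

theorem MaxDegreeLE.spanningCoe {K : SimpleGraph W} (hK : MaxDegreeLE h K) :
    MaxDegreeLE h K.spanningCoe := by
  intro x
  by_cases hx : x ∈ W
  · have himage : K.spanningCoe.neighborSet x = Subtype.val '' K.neighborSet ⟨x, hx⟩ :=
      K.neighborSet_map (Function.Embedding.subtype _) ⟨x, hx⟩
    rw [himage, Set.ncard_image_of_injective _ Subtype.val_injective]
    exact hK ⟨x, hx⟩
  · have hisolated : K.spanningCoe.IsIsolated x :=
      (notMem_support_iff_isIsolated _).1 (hx <| support_spanningCoe_subset K ·)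
    rw [hisolated.neighborSet_eq_empty, Set.ncard_empty]
    exact h.zero_le

theorem support_edge_subset (a b : V) : (edge a b).support ⊆ {a, b} := by
  rintro x ⟨y, hxy⟩
  exact ((edge_adj ..).1 hxy).1.imp And.left And.left

theorem maxDegreeLE_one_edge (a b : V) : MaxDegreeLE 1 (edge a b) := by
  intro x
  have hsub : ((edge a b).neighborSet x).Subsingleton := by
    intro y hy z hz
    simp only [mem_neighborSet, edge_adj] at hy hz
    grind
  have := hsub.finite.to_subtype
  exact Set.ncard_le_one_iff_subsingleton.2 hsub

theorem support_edge_sup_edge_subset (a b c e : V) :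
    (edge a b ⊔ edge c e).support ⊆ {a, b} ∪ {c, e} := by
  rintro x ⟨y, hxy | hxy⟩
  · exact .inl (support_edge_subset a b ⟨y, hxy⟩)
  · exact .inr (support_edge_subset c e ⟨y, hxy⟩)

theorem maxDegreeLE_one_edge_sup_edge {a b c e : V} (hac : a ≠ c) (hae : a ≠ e) (hbc : b ≠ c)
    (hbe : b ≠ e) : MaxDegreeLE 1 (edge a b ⊔ edge c e) :=
  (maxDegreeLE_one_edge a b).sup (maxDegreeLE_one_edge c e) <|
    .mono (support_edge_subset a b) (support_edge_subset c e) (by simp [*, Ne.symm])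

theorem induce_eq_bot_of_disjoint_support (hHW : Disjoint H.support W) : H.induce W = ⊥ :=
  SimpleGraph.ext <| funext₂ fun x y => eq_false fun hxy =>
    Set.disjoint_left.1 hHW ⟨y, hxy⟩ x.2

theorem Decomposable.exists_extension {M : SimpleGraph V} (hG : Decomposable d h (G.induce W))
    (hMG : M ≤ G) (hM : MaxDegreeLE h M) (hMW : Disjoint M.support W) :
    ∃ H₁ H₂ : SimpleGraph V, H₁ ⊔ H₂ = G ∧ Disjoint H₁ H₂ ∧ M ≤ H₂ ∧
      DegenerateOn d H₁ W ∧ MaxDegreeLE h H₂ := by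
  obtain ⟨K₁, K₂, hsup, hdisj, hdeg, hmax⟩ := hG
  have hKG : K₂.spanningCoe ≤ G :=
    (map_monotone _ (hsup ▸ le_sup_right)).trans (G.spanningCoe_induce_le W)
  have hinduce : (G \ (K₂.spanningCoe ⊔ M)).induce W = K₁ :=
    calc (G \ (K₂.spanningCoe ⊔ M)).induce W
        = G.induce W \ (K₂.spanningCoe.induce W ⊔ M.induce W) := rfl
      _ = (K₁ ⊔ K₂) \ K₂ := by
        rw [induce_eq_bot_of_disjoint_support hMW, induce_spanningCoe, sup_bot_eq, hsup]
      _ = K₁ := by rw [sup_sdiff_right_self, hdisj.sdiff_eq_left]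
  exact ⟨G \ (K₂.spanningCoe ⊔ M), K₂.spanningCoe ⊔ M, sdiff_sup_cancel (sup_le hKG hMG),
    disjoint_sdiff_self_left, le_sup_right, .of_induce (hinduce ▸ hdeg),
    hmax.spanningCoe.sup hM (hMW.symm.mono_left (support_spanningCoe_subset K₂))⟩

theorem stmt_5_general (G : SimpleGraph V) (v v₁ v₂ v₃ v₄ : V) (hh : 1 ≤ h)
    (hne13 : v₁ ≠ v₃) (hne24 : v₂ ≠ v₄)
    (hadj1 : G.Adj v v₁) (hadj2 : G.Adj v v₂) (hadj3 : G.Adj v v₃) (hadj4 : G.Adj v v₄)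
    (h12 : G.Adj v₁ v₂) (h23 : G.Adj v₂ v₃) (h34 : G.Adj v₃ v₄)
    (hv : (G.neighborSet v).encard ≤ (d + 2 : ℕ))
    (hd1 : (G.neighborSet v₁).encard ≤ (d + 2 : ℕ))
    (hd2 : (G.neighborSet v₂).encard ≤ (d + 1 : ℕ))
    (hd3 : (G.neighborSet v₃).encard ≤ (d + 3 : ℕ))
    (hd4 : (G.neighborSet v₄).encard ≤ (d + 1 : ℕ))
    (hdec : Decomposable d h
      (G.induce {u : V | u ≠ v ∧ u ≠ v₁ ∧ u ≠ v₂ ∧ u ≠ v₃ ∧ u ≠ v₄})) :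
    Decomposable d h G := by
  have hMG : edge v v₁ ⊔ edge v₂ v₃ ≤ G :=
    sup_le ((edge_le_iff _).2 (.inr hadj1)) ((edge_le_iff _).2 (.inr h23))
  have hM : MaxDegreeLE h (edge v v₁ ⊔ edge v₂ v₃) :=
    (maxDegreeLE_one_edge_sup_edge hadj2.ne hadj3.ne h12.ne hne13).mono_s5 hh
  obtain ⟨H₁, H₂, hsup, hdisj, hMH₂, hW, hH₂⟩ := hdec.exists_extension hMG hM <|
    .mono_left (support_edge_sup_edge_subset v v₁ v₂ v₃) (by simp)
  have hH₁G : H₁ ≤ G := hsup ▸ le_sup_left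
  have hM₁ {x y : V} (hxy : (edge v v₁ ⊔ edge v₂ v₃).Adj x y) : ¬H₁.Adj x y := fun hxy₁ =>
    disjoint_left.1 hdisj x y hxy₁ (hMH₂ hxy)
  have hvv₁ : ¬H₁.Adj v v₁ := hM₁ (by simp [edge_adj, hadj1.ne])
  have hv₂v₃ : ¬H₁.Adj v₂ v₃ := hM₁ (by simp [edge_adj, h23.ne])
  replace hW := hW.insert <| encard_neighborSet_inter_le (T := {v, v₂, v₄}) hH₁G hd3
    (by simp [hadj3.symm, h23.symm, h34])
    (Set.encard_eq_three.2 ⟨_, _, _, hadj2.ne, hadj4.ne, hne24, rfl⟩).ge (by simp)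
  replace hW := hW.insert <| encard_neighborSet_inter_le (T := {v, v₂}) hH₁G hd1
    (by simp [hadj1.symm, h12]) (Set.encard_pair hadj2.ne).ge (by simp [hadj2.ne, hadj3.ne, h23.ne])
  replace hW := hW.insert <| encard_neighborSet_inter_le (T := {v}) hH₁G hd4
    (by simp [hadj4.symm]) (by simp) (by simp [hadj1.ne, hadj3.ne])
  replace hW := hW.insert <| encard_neighborSet_inter_le (T := {v₁, v₂}) hH₁G hv
    (by simp [hadj1, hadj2]) (Set.encard_pair h12.ne).ge (by simp [hvv₁, h12.ne', hne24, h23.ne])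
  replace hW := hW.insert <| encard_neighborSet_inter_le (T := {v₃}) hH₁G hd2
    (by simp [h23]) (by simp) (by simp [hv₂v₃])
  refine ⟨H₁, H₂, hsup, hdisj, degenerateOn_univ.1 ?_, hH₂⟩
  convert hW using 1
  grind

end

theorem stmt_5 {V : Type*} [Fintype V] (G : SimpleGraph V) (v v₁ v₂ v₃ v₄ : V)
    (hv : (G.neighborSet v).ncard = 5)
    (hne12 : v₁ ≠ v₂) (hne13 : v₁ ≠ v₃) (hne14 : v₁ ≠ v₄)
    (hne23 : v₂ ≠ v₃) (hne24 : v₂ ≠ v₄) (hne34 : v₃ ≠ v₄)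
    (hadj1 : G.Adj v v₁) (hadj2 : G.Adj v v₂) (hadj3 : G.Adj v v₃) (hadj4 : G.Adj v v₄)
    (h12 : G.Adj v₁ v₂) (h23 : G.Adj v₂ v₃) (h34 : G.Adj v₃ v₄)
    (h13 : ¬ G.Adj v₁ v₃) (h14 : ¬ G.Adj v₁ v₄) (h24 : ¬ G.Adj v₂ v₄)
    (hd1 : (G.neighborSet v₁).ncard = 5)
    (hd2 : (G.neighborSet v₂).ncard = 4) (hd4 : (G.neighborSet v₄).ncard = 4)
    (hd3 : (G.neighborSet v₃).ncard = 6)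
    (hdec : Decomposable 3 1
      (G.induce {u : V | u ≠ v ∧ u ≠ v₁ ∧ u ≠ v₂ ∧ u ≠ v₃ ∧ u ≠ v₄})) :
    Decomposable 3 1 G := by
  have hencard {u : V} {n : ℕ} (hu : (G.neighborSet u).ncard = n) :
      (G.neighborSet u).encard ≤ n :=
    Set.encard_le_coe_iff_finite_ncard_le.2 ⟨Set.toFinite _, hu.le⟩
  exact stmt_5_general G v v₁ v₂ v₃ v₄ le_rfl hne13 hne24 hadj1 hadj2 hadj3 hadj4 h12 h23 h34
    (hencard hv) (hencard hd1) (hencard hd2) (hencard hd3) (hencard hd4) hdec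
end
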